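/- arXiv:1911.06491 — 2 statements merged into one kernel-verified Lean document; each statement's English description precedes it below -/
import Mathlib

section
/- For all vectors a, b : P → ℝ, the Euclidean dot product satisfies ⟨a,b⟩ = ⟨mat(D·((DᵀD)⁻¹·a)), mat(D·b)⟩_F, i.e., Σ_{p∈P} a(p)·b(p) = trace( (mat(D·((DᵀD)⁻¹·a)))ᵀ · mat(D·b) ). (The correct lifting of a gradient vector from ℝ^{n(n+1)/2} to a symmetric matrix is a ↦ mat(D·(DᵀD)⁻¹·a), not a ↦ mat(D·a).) -/
open Matrix

/-- Index set `P = {(i,j) : i ≤ j}` of size `n(n+1)/2`. -/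
abbrev SymIdx (n : ℕ) := {p : Fin n × Fin n // p.1 ≤ p.2}

/-- The duplication matrix `D`, with `D (k,l) (i,j) = 1` if `(k,l) = (i,j)` or
`(k,l) = (j,i)`, and `0` otherwise. -/
def Dup (n : ℕ) : Matrix (Fin n × Fin n) (SymIdx n) ℝ :=
  fun kl q => if kl = q.1 ∨ kl = (q.1.2, q.1.1) then 1 else 0

/-- `vec(A) (k,l) = A k l`. -/
def vec {n : ℕ} (A : Matrix (Fin n) (Fin n) ℝ) : Fin n × Fin n → ℝ :=
  fun p => A p.1 p.2

/-- `hvec(A) (i,j) = A i j` for `i ≤ j`. -/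
def hvec {n : ℕ} (A : Matrix (Fin n) (Fin n) ℝ) : SymIdx n → ℝ :=
  fun q => A q.1.1 q.1.2

/-- Reshape a vector indexed by `Fin n × Fin n` into an `n × n` matrix. -/
def mat {n : ℕ} (v : Fin n × Fin n → ℝ) : Matrix (Fin n) (Fin n) ℝ :=
  fun k l => v (k, l)

/-! The transpose of `D *ᵥ ·` with respect to the dot products is `Dᵀ *ᵥ ·`, so moving the right
factor `D` across turns `(DᵀD)⁻¹` into the identity. The Gram matrix `DᵀD` is invertible because the
rows of `D` indexed by pairs `i ≤ j` form an identity matrix: this makes `D` injective, and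
`DᵀDx = 0` forces `(Dx) ⬝ᵥ (Dx) = 0`, hence `Dx = 0` and `x = 0`. -/

section Gram

variable {m n R : Type*} [Fintype m] [Fintype n] [DecidableEq n]

theorem mulVec_inv_transpose_mul_self_mulVec_dotProduct_mulVec [CommRing R] {A : Matrix m n R}
    (hA : IsUnit (Aᵀ * A)) (x y : n → R) :
    A *ᵥ ((Aᵀ * A)⁻¹ *ᵥ x) ⬝ᵥ A *ᵥ y = x ⬝ᵥ y := by
  have hdet : IsUnit (Aᵀ * A).det := (isUnit_iff_isUnit_det _).mp hA
  calc A *ᵥ ((Aᵀ * A)⁻¹ *ᵥ x) ⬝ᵥ A *ᵥ y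
      = Aᵀ *ᵥ (A *ᵥ ((Aᵀ * A)⁻¹ *ᵥ x)) ⬝ᵥ y := by rw [dotProduct_mulVec, mulVec_transpose]
    _ = (Aᵀ * A * (Aᵀ * A)⁻¹) *ᵥ x ⬝ᵥ y := by simp only [mulVec_mulVec, Matrix.mul_assoc]
    _ = x ⬝ᵥ y := by rw [mul_nonsing_inv _ hdet, one_mulVec]

theorem isUnit_transpose_mul_self_of_mulVec_injective [Field R] [LinearOrder R]
    [IsStrictOrderedRing R] {A : Matrix m n R} (hA : Function.Injective A.mulVec) :
    IsUnit (Aᵀ * A) := by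
  have hker : LinearMap.ker (Aᵀ * A).mulVecLin = ⊥ := by
    rw [ker_mulVecLin_transpose_mul_self, LinearMap.ker_eq_bot]
    exact hA
  exact mulVec_injective_iff_isUnit.mp (LinearMap.ker_eq_bot.mp hker)

end Gram

theorem mulVec_injective_of_submatrix_eq_one {m n R : Type*} [Fintype n] [DecidableEq n]
    [NonAssocSemiring R] {A : Matrix m n R} {r : n → m} (hA : A.submatrix r id = 1) :
    Function.Injective A.mulVec := by
  have hleft (v : n → R) : (A *ᵥ v) ∘ r = v :=
    calc (A *ᵥ v) ∘ r = A.submatrix r id *ᵥ v := rfl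
      _ = v := by rw [hA, one_mulVec]
  exact Function.LeftInverse.injective (g := (· ∘ r)) hleft

theorem Dup_submatrix_val_eq_one (n : ℕ) :
    (Dup n).submatrix (Subtype.val : SymIdx n → Fin n × Fin n) id = 1 := by
  ext p q
  have eq_or_eq_swap_iff : p.1 = q.1 ∨ p.1 = (q.1.2, q.1.1) ↔ p = q := by
    constructor
    · rintro (heq | hswap)
      · exact Subtype.ext heq
      · have hp : q.1.2 ≤ q.1.1 := by simpa only [hswap] using p.2
        have hdiag : q.1.1 = q.1.2 := le_antisymm q.2 hp
        exact Subtype.ext (hswap.trans (Prod.ext hdiag.symm hdiag))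
    · rintro rfl
      exact Or.inl rfl
  simp [Dup, one_apply, eq_or_eq_swap_iff]

theorem trace_transpose_mat_mul_mat {n : ℕ} (u v : Fin n × Fin n → ℝ) :
    ((mat u)ᵀ * mat v).trace = u ⬝ᵥ v :=
  -- `Matrix.vec` lists the entries in the order `(column, row)`, while `mat` reads `(row, column)`.
  calc ((mat u)ᵀ * mat v).trace
      = (u ∘ Equiv.prodComm _ _) ⬝ᵥ (v ∘ Equiv.prodComm _ _) := (vec_dotProduct_vec _ _).symm
    _ = u ⬝ᵥ v := comp_equiv_dotProduct_comp_equiv _ _ _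

/-- For all `a, b : P → ℝ`,
`⟨a,b⟩ = ⟨mat(D·((DᵀD)⁻¹·a)), mat(D·b)⟩_F`: the correct lifting of a gradient
vector from `ℝ^{n(n+1)/2}` to a symmetric matrix is `a ↦ mat(D·(DᵀD)⁻¹·a)`. -/
theorem dot_eq_frobenius_of_correct_lifting (n : ℕ) (a b : SymIdx n → ℝ) :
    a ⬝ᵥ b =
      ((mat (Dup n *ᵥ (((Dup n)ᵀ * Dup n)⁻¹ *ᵥ a)))ᵀ * mat (Dup n *ᵥ b)).trace := by
  have hgram : IsUnit ((Dup n)ᵀ * Dup n) :=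
    isUnit_transpose_mul_self_of_mulVec_injective
      (mulVec_injective_of_submatrix_eq_one (Dup_submatrix_val_eq_one n))
  rw [trace_transpose_mat_mul_mat,
    mulVec_inv_transpose_mul_self_mulVec_dotProduct_mulVec hgram]
end

section
/- Main theorem: Let φ be a real-valued function on real n×n matrices, differentiable (Fréchet) at a symmetric matrix A, and let G satisfy Dφ(A)[H] = ⟨G,H⟩_F for every matrix H. Define φ_s : (P → ℝ) → ℝ by φ_s(a) := φ(mat(D·a)). Then φ_s is differentiable at hvec(A), and if g : P → ℝ represents its derivative, i.e., Dφ_s(hvec(A))[v] = Σ_{p∈P} g(p)·v(p) for all v : P → ℝ, then the lifted matrix G_s := mat(D·((DᵀD)⁻¹·g)) equals sym(G) = (G + Gᵀ)/2. In particular ⟨G_s,H⟩_F = ⟨sym(G),H⟩_F for every symmetric H, so the correct 'symmetric gradient' is (G + Gᵀ)/2, not G + Gᵀ − G∘I. -/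
open Matrix

attribute [local instance] Matrix.frobeniusNormedAddCommGroup Matrix.frobeniusNormedSpace

/-!
The upper triangle of `mat (D a)` is `a`, so `D` is injective and `(DᵀD)⁻¹Dᵀ` is a left inverse of
it; conversely `D hvec S = vec S` for symmetric `S`. By the chain rule the derivative of `φ_s` is
represented by `g = Dᵀ vec G`. The rows `(k,l)` and `(l,k)` of `D` agree, so `Dᵀ` does not see the
antisymmetric part of `G` and `g = Dᵀ vec (sym G) = DᵀD hvec (sym G)`. Hence
`(DᵀD)⁻¹ g = hvec (sym G)`, which `D` lifts back to `sym G`.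
-/

section LeftInverse

variable {ι κ R : Type*} [Fintype ι] [Fintype κ] [DecidableEq κ]
  [Field R] [LinearOrder R] [IsStrictOrderedRing R]

theorem isUnit_transpose_mul_self_of_mulVec_injective_s15 {M : Matrix ι κ R}
    (hM : Function.Injective M.mulVec) : IsUnit (Mᵀ * M) := by
  have hker : LinearMap.ker (Mᵀ * M).mulVecLin = ⊥ := by
    rw [ker_mulVecLin_transpose_mul_self]
    exact LinearMap.ker_eq_bot.2 hM
  exact mulVec_injective_iff_isUnit.1 (LinearMap.ker_eq_bot.1 hker)

theorem inv_transpose_mul_self_mulVec_transpose_mulVec {M : Matrix ι κ R}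
    (hM : Function.Injective M.mulVec) (x : κ → R) :
    (Mᵀ * M)⁻¹ *ᵥ (Mᵀ *ᵥ (M *ᵥ x)) = x := by
  have hdet : IsUnit (Mᵀ * M).det :=
    (isUnit_iff_isUnit_det _).1 (isUnit_transpose_mul_self_of_mulVec_injective_s15 hM)
  rw [mulVec_mulVec x, mulVec_mulVec, nonsing_inv_mul _ hdet, one_mulVec]

end LeftInverse

/-- The symmetric part `sym(G)` of a real square matrix. -/
noncomputable def symPart {ι : Type*} (G : Matrix ι ι ℝ) : Matrix ι ι ℝ :=
  (1 / 2 : ℝ) • (G + Gᵀ)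

theorem isSymm_symPart {ι : Type*} (G : Matrix ι ι ℝ) : (symPart G).IsSymm :=
  (isSymm_add_transpose_self G).smul _

section Duplication

variable {n : ℕ}

theorem dup_apply_swap (p : Fin n × Fin n) (q : SymIdx n) : Dup n p.swap q = Dup n p q := by
  have hiff : (p.swap = q.1 ∨ p.swap = (q.1.2, q.1.1)) ↔ (p = q.1 ∨ p = (q.1.2, q.1.1)) := by
    simp only [Prod.ext_iff, Prod.fst_swap, Prod.snd_swap]
    tauto
  simp only [Dup, hiff]

theorem dup_apply_coe (p q : SymIdx n) : Dup n p.1 q = if p = q then 1 else 0 := by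
  have hiff : (p.1 = q.1 ∨ p.1 = (q.1.2, q.1.1)) ↔ p = q := by
    refine ⟨?_, fun h => Or.inl (congrArg _ h)⟩
    rintro (heq | hswap)
    · exact Subtype.ext heq
    · obtain ⟨hfst, hsnd⟩ : p.1.1 = q.1.2 ∧ p.1.2 = q.1.1 := Prod.ext_iff.1 hswap
      have hdiag : q.1.1 = q.1.2 := le_antisymm q.2 (hfst.symm.trans_le (p.2.trans_eq hsnd))
      exact Subtype.ext (Prod.ext (hfst.trans hdiag.symm) (hsnd.trans hdiag))
  simp only [Dup, hiff]

theorem isSymm_mat_dup_mulVec (a : SymIdx n → ℝ) : (mat (Dup n *ᵥ a)).IsSymm := by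
  ext k l
  exact Finset.sum_congr rfl fun q _ => congrArg (· * a q) (dup_apply_swap (k, l) q)

theorem hvec_mat_dup_mulVec (a : SymIdx n → ℝ) : hvec (mat (Dup n *ᵥ a)) = a := by
  ext p
  change ∑ q, Dup n p.1 q * a q = a p
  simp [dup_apply_coe]

theorem hvec_injOn_isSymm :
    Set.InjOn hvec {S : Matrix (Fin n) (Fin n) ℝ | S.IsSymm} := by
  intro S hS T hT hST
  ext k l
  rcases le_total k l with hkl | hlk
  · exact congrFun hST ⟨(k, l), hkl⟩
  · rw [← hS.apply, ← hT.apply]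
    exact congrFun hST ⟨(l, k), hlk⟩

theorem mat_dup_mulVec_hvec {S : Matrix (Fin n) (Fin n) ℝ} (hS : S.IsSymm) :
    mat (Dup n *ᵥ hvec S) = S :=
  hvec_injOn_isSymm (isSymm_mat_dup_mulVec _) hS (hvec_mat_dup_mulVec _)

theorem dup_mulVec_hvec {S : Matrix (Fin n) (Fin n) ℝ} (hS : S.IsSymm) :
    Dup n *ᵥ hvec S = _root_.vec S :=
  congrArg _root_.vec (mat_dup_mulVec_hvec hS)

theorem dup_mulVec_injective : Function.Injective (Dup n).mulVec :=
  Function.LeftInverse.injective (g := fun w => hvec (mat w)) hvec_mat_dup_mulVec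

theorem dup_transpose_mulVec_vec_transpose (G : Matrix (Fin n) (Fin n) ℝ) :
    (Dup n)ᵀ *ᵥ _root_.vec Gᵀ = (Dup n)ᵀ *ᵥ _root_.vec G := by
  ext q
  refine Fintype.sum_equiv (Equiv.prodComm _ _) _ _ fun p => ?_
  exact congrArg (· * G p.2 p.1) (dup_apply_swap p q).symm

theorem dup_transpose_mulVec_vec_symPart (G : Matrix (Fin n) (Fin n) ℝ) :
    (Dup n)ᵀ *ᵥ _root_.vec (symPart G) = (Dup n)ᵀ *ᵥ _root_.vec G := by
  have vec_symPart :
      _root_.vec (symPart G) = (1 / 2 : ℝ) • (_root_.vec G + _root_.vec Gᵀ) := rfl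
  rw [vec_symPart, mulVec_smul, mulVec_add, dup_transpose_mulVec_vec_transpose, ← two_smul ℝ,
    smul_smul]
  norm_num

theorem inv_dup_gram_mulVec_dup_transpose_mulVec_vec (G : Matrix (Fin n) (Fin n) ℝ) :
    ((Dup n)ᵀ * Dup n)⁻¹ *ᵥ ((Dup n)ᵀ *ᵥ _root_.vec G) = hvec (symPart G) := by
  rw [← dup_transpose_mulVec_vec_symPart, ← dup_mulVec_hvec (isSymm_symPart G),
    inv_transpose_mul_self_mulVec_transpose_mulVec dup_mulVec_injective]

theorem trace_transpose_mul_mat (G : Matrix (Fin n) (Fin n) ℝ) (w : Fin n × Fin n → ℝ) :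
    (Gᵀ * mat w).trace = _root_.vec G ⬝ᵥ w := by
  rw [trace_mul_comm, ← trace_transpose, transpose_mul, transpose_transpose]
  -- `Matrix.vec` stacks columns, so `_root_.vec G` unfolds to `Matrix.vec Gᵀ`.
  exact (vec_dotProduct_vec Gᵀ (mat w)ᵀ).symm

theorem trace_transpose_mul_mat_dup_mulVec (G : Matrix (Fin n) (Fin n) ℝ) (v : SymIdx n → ℝ) :
    (Gᵀ * mat (Dup n *ᵥ v)).trace = ((Dup n)ᵀ *ᵥ _root_.vec G) ⬝ᵥ v := by
  rw [trace_transpose_mul_mat, dotProduct_mulVec, mulVec_transpose]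

/-- The map `a ↦ mat (D a)` that rebuilds a symmetric matrix from its upper triangle. It is
bundled as a continuous linear map because it is its own derivative in the chain rule. -/
noncomputable def dupLift (n : ℕ) : (SymIdx n → ℝ) →L[ℝ] Matrix (Fin n) (Fin n) ℝ :=
  LinearMap.toContinuousLinearMap
    { toFun := fun a => mat (Dup n *ᵥ a)
      map_add' := fun a b => congrArg mat (mulVec_add (Dup n) a b)
      map_smul' := fun c a => congrArg mat (mulVec_smul (Dup n) c a) }

theorem hasFDerivAt_comp_mat_dup_mulVec {E : Type*} [NormedAddCommGroup E] [NormedSpace ℝ E]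
    {φ : Matrix (Fin n) (Fin n) ℝ → E} {φ' : Matrix (Fin n) (Fin n) ℝ →L[ℝ] E}
    {A : Matrix (Fin n) (Fin n) ℝ} (hA : A.IsSymm)
    (hφ : HasFDerivWithinAt φ φ' {S | S.IsSymm} A) :
    HasFDerivAt (fun a : SymIdx n → ℝ => φ (mat (Dup n *ᵥ a))) (φ'.comp (dupLift n)) (hvec A) := by
  have hlift : dupLift n (hvec A) = A := mat_dup_mulVec_hvec hA
  rw [← hlift] at hφ
  exact hφ.comp_hasFDerivAt (hvec A) (dupLift n).hasFDerivAt
    (Filter.Eventually.of_forall isSymm_mat_dup_mulVec)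

theorem correct_symmetric_gradient_general {φ : Matrix (Fin n) (Fin n) ℝ → ℝ}
    {φ' : Matrix (Fin n) (Fin n) ℝ →L[ℝ] ℝ} {A G : Matrix (Fin n) (Fin n) ℝ}
    (hA : A.IsSymm) (hφ : HasFDerivWithinAt φ φ' {S | S.IsSymm} A)
    (hG : ∀ H : Matrix (Fin n) (Fin n) ℝ, H.IsSymm → φ' H = (Gᵀ * H).trace) :
    DifferentiableAt ℝ (fun a : SymIdx n → ℝ => φ (mat (Dup n *ᵥ a))) (hvec A) ∧
    ∀ g : SymIdx n → ℝ,
      (∀ v : SymIdx n → ℝ,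
        fderiv ℝ (fun a : SymIdx n → ℝ => φ (mat (Dup n *ᵥ a))) (hvec A) v = g ⬝ᵥ v) →
      mat (Dup n *ᵥ (((Dup n)ᵀ * Dup n)⁻¹ *ᵥ g)) = symPart G := by
  have hderiv := hasFDerivAt_comp_mat_dup_mulVec hA hφ
  refine ⟨hderiv.differentiableAt, fun g hg => ?_⟩
  have hg_eq : g = (Dup n)ᵀ *ᵥ _root_.vec G := by
    refine dotProduct_eq _ _ fun v => ?_
    calc g ⬝ᵥ v = φ' (mat (Dup n *ᵥ v)) := by rw [← hg v, hderiv.fderiv]; rfl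
      _ = (Gᵀ * mat (Dup n *ᵥ v)).trace := hG _ (isSymm_mat_dup_mulVec v)
      _ = ((Dup n)ᵀ *ᵥ _root_.vec G) ⬝ᵥ v := trace_transpose_mul_mat_dup_mulVec G v
  rw [hg_eq, inv_dup_gram_mulVec_dup_transpose_mulVec_vec, mat_dup_mulVec_hvec (isSymm_symPart G)]

end Duplication

/-- Main theorem: if `φ` is differentiable at the symmetric matrix `A` with
gradient `G` (`Dφ(A)[H] = ⟨G,H⟩_F` for all `H`), then `φ_s(a) := φ(mat(D·a))`
is differentiable at `hvec(A)`, and if `g` represents its derivative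
(`Dφ_s(hvec A)[v] = ⟨g,v⟩` for all `v`), then the lifted matrix
`G_s := mat(D·((DᵀD)⁻¹·g))` equals `sym(G) = (G + Gᵀ)/2`; in particular
`⟨G_s,H⟩_F = ⟨sym(G),H⟩_F` for every symmetric `H`. -/
theorem correct_symmetric_gradient (n : ℕ)
    (φ : Matrix (Fin n) (Fin n) ℝ → ℝ) (A G : Matrix (Fin n) (Fin n) ℝ)
    (hA : Aᵀ = A) (hφ : DifferentiableAt ℝ φ A)
    (hG : ∀ H : Matrix (Fin n) (Fin n) ℝ, fderiv ℝ φ A H = (Gᵀ * H).trace) :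
    DifferentiableAt ℝ (fun a : SymIdx n → ℝ => φ (mat (Dup n *ᵥ a))) (hvec A) ∧
    ∀ g : SymIdx n → ℝ,
      (∀ v : SymIdx n → ℝ,
        fderiv ℝ (fun a : SymIdx n → ℝ => φ (mat (Dup n *ᵥ a))) (hvec A) v = g ⬝ᵥ v) →
      mat (Dup n *ᵥ (((Dup n)ᵀ * Dup n)⁻¹ *ᵥ g)) = (1 / 2 : ℝ) • (G + Gᵀ) ∧
      ∀ H : Matrix (Fin n) (Fin n) ℝ, Hᵀ = H →
        ((mat (Dup n *ᵥ (((Dup n)ᵀ * Dup n)⁻¹ *ᵥ g)))ᵀ * H).trace =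
          ((((1 / 2 : ℝ) • (G + Gᵀ))ᵀ) * H).trace :=
  (correct_symmetric_gradient_general hA hφ.hasFDerivAt.hasFDerivWithinAt fun H _ => hG H).imp_right
    fun hlift g hg => ⟨hlift g hg, fun H _ => congrArg (fun S => (Sᵀ * H).trace) (hlift g hg)⟩
end
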